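/- Let N ≥ 2, let 0 < δ < 1, and let A ≥ 1. Let f be a smooth real-valued function on a compact interval I = [a, b] such that the N-th derivative f^{(N)} is single-signed on I, and suppose that for all real λ ≠ 0, |∫_I e^{iλ f(x)} dx| ≤ A |λ|^{-δ}. Then there is a constant C, depending only on d, N and δ (and not on f, I, A or λ), such that for every polynomial P of degree d ≥ 2 whose derivative P′ is a semi-non-degenerating (SND) polynomial of degree d − 1, and for all real λ with |λ| ≥ 1, |∫_I e^{iλ P(f(x))} dx| ≤ C · A^{1/(1−δ)} · |λ|^{-δ/d}. -/

import Mathlib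

open MeasureTheory

/-- A real polynomial `Q = a_m x^m + … + a_0` (with `m = Q.natDegree`) is
semi-non-degenerating (SND) if `max_j |a_{m-j}| = 1` and this maximum is attained by
some `j` with `j ≤ m/2`. -/
def IsSND (Q : Polynomial ℝ) : Prop :=
  (∀ i, |Q.coeff i| ≤ 1) ∧ ∃ j, 2 * j ≤ Q.natDegree ∧ |Q.coeff (Q.natDegree - j)| = 1

/-- `[a, b]` can be cut at no more than `K` points so that `q` holds on every subinterval
without a cut in its interior. -/
def SplitsInto (K : ℕ) (q : ℝ → ℝ → Prop) (a b : ℝ) : Prop :=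
  ∃ T : Finset ℝ, T.card ≤ K ∧
    ∀ c d, a ≤ c → c ≤ d → d ≤ b → (∀ t ∈ T, t ∉ Set.Ioo c d) → q c d

/-- `g` does not change sign on `s`. -/
def SingleSignedOn (g : ℝ → ℝ) (s : Set ℝ) : Prop :=
  (∀ x ∈ s, 0 ≤ g x) ∨ (∀ x ∈ s, g x ≤ 0)

namespace SplitsInto

variable {K L : ℕ} {q q' : ℝ → ℝ → Prop} {a b : ℝ}

theorem mono (h : SplitsInto K q a b) (hKL : K ≤ L)
    (hq : ∀ c d, a ≤ c → c ≤ d → d ≤ b → q c d → q' c d) : SplitsInto L q' a b := by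
  obtain ⟨T, hT, h⟩ := h
  exact ⟨T, hT.trans hKL, fun c d h1 h2 h3 h4 => hq c d h1 h2 h3 (h c d h1 h2 h3 h4)⟩

theorem and (h : SplitsInto K q a b) (h' : SplitsInto L q' a b) :
    SplitsInto (K + L) (fun c d => q c d ∧ q' c d) a b := by
  obtain ⟨T, hT, h⟩ := h
  obtain ⟨T', hT', h'⟩ := h'
  refine ⟨T ∪ T', (Finset.card_union_le _ _).trans (by omega), fun c d h1 h2 h3 h4 => ?_⟩
  exact ⟨h c d h1 h2 h3 fun t ht => h4 t (Finset.mem_union_left _ ht),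
    h' c d h1 h2 h3 fun t ht => h4 t (Finset.mem_union_right _ ht)⟩

theorem forall_mem_finset (s : Finset ℝ) {p : ℝ → ℝ → ℝ → Prop}
    (h : ∀ r ∈ s, SplitsInto 1 (p r) a b) :
    SplitsInto s.card (fun c d => ∀ r ∈ s, p r c d) a b := by
  choose! T hT h using h
  refine ⟨s.biUnion T, ?_, fun c d h1 h2 h3 h4 r hr => ?_⟩
  · simpa using Finset.card_biUnion_le_card_mul s T 1 hT
  · exact h r hr c d h1 h2 h3 fun t ht => h4 t (Finset.mem_biUnion.2 ⟨r, hr, ht⟩)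

/-- Induction over the pieces of a splitting: prove a claim on single pieces and glue. -/
theorem glue {r : ℕ → ℝ → ℝ → Prop} (hab : a ≤ b) (h : SplitsInto K q a b)
    (base : ∀ c d, a ≤ c → c ≤ d → d ≤ b → q c d → r 0 c d)
    (step : ∀ i j c t d, a ≤ c → c ≤ t → t ≤ d → d ≤ b → r i c t → r j t d →
      r (i + j + 1) c d) :
    ∃ k ≤ K, r k a b := by
  induction K using Nat.strong_induction_on generalizing a b with
  | _ K ih =>
    obtain ⟨T, hT, h⟩ := h
    by_cases hex : ∃ t ∈ T, t ∈ Set.Ioo a b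
    · obtain ⟨t, htT, hat, htb⟩ := hex
      have hcard : (T.filter (· < t)).card + (T.filter (t < ·)).card + 1 ≤ T.card := by
        rw [← Finset.card_union_of_disjoint, ← Finset.card_insert_of_notMem (a := t)]
        · apply Finset.card_le_card
          intro x hx
          simp only [Finset.mem_insert, Finset.mem_union, Finset.mem_filter] at hx
          rcases hx with rfl | hx | hx
          exacts [htT, hx.1, hx.1]
        · simp
        · rw [Finset.disjoint_left]
          intro x hx hx'
          simp only [Finset.mem_filter] at hx hx'
          linarith
      obtain ⟨i, hi, hri⟩ := ih _ (by omega) hat.le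
        ⟨T.filter (· < t), le_rfl, fun c d h1 h2 h3 h4 => h c d h1 h2 (h3.trans htb.le)
          fun s hs hs' => h4 s (Finset.mem_filter.2 ⟨hs, hs'.2.trans_le h3⟩) hs'⟩
        (fun c d h1 h2 h3 => base c d h1 h2 (h3.trans htb.le))
        (fun i j c s d h1 h2 h3 h4 => step i j c s d h1 h2 h3 (h4.trans htb.le))
      obtain ⟨j, hj, hrj⟩ := ih _ (by omega) htb.le
        ⟨T.filter (t < ·), le_rfl, fun c d h1 h2 h3 h4 => h c d (hat.le.trans h1) h2 h3
          fun s hs hs' => h4 s (Finset.mem_filter.2 ⟨hs, h1.trans_lt hs'.1⟩) hs'⟩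
        (fun c d h1 h2 h3 => base c d (hat.le.trans h1) h2 h3)
        (fun i j c s d h1 h2 h3 h4 => step i j c s d (hat.le.trans h1) h2 h3 h4)
      exact ⟨i + j + 1, by omega, step i j a t b le_rfl hat.le htb.le le_rfl hri hrj⟩
    · push Not at hex
      exact ⟨0, Nat.zero_le _, base a b le_rfl hab le_rfl (h a b le_rfl hab le_rfl hex)⟩

theorem bind {m : ℕ} (hab : a ≤ b) (h : SplitsInto K (SplitsInto m q) a b) :
    SplitsInto (K + (K + 1) * m) q a b := by
  obtain ⟨k, hk, h⟩ := h.glue (r := fun k c d => SplitsInto (k + (k + 1) * m) q c d) hab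
    (fun c d _ _ _ h => h.mono (by simp) fun _ _ _ _ _ => id) (by
      rintro i j c t d - - - - ⟨T, hT, h⟩ ⟨T', hT', h'⟩
      refine ⟨insert t (T ∪ T'), ?_, fun x y h1 h2 h3 h4 => ?_⟩
      · refine (Finset.card_insert_le _ _).trans ?_
        have := Finset.card_union_le T T'
        nlinarith
      · have ht := h4 t (Finset.mem_insert_self _ _)
        by_cases hy : y ≤ t
        · exact h x y h1 h2 hy fun s hs => h4 s (by simp [hs])
        · have : t ≤ x := by
            by_contra hx
            exact ht ⟨not_le.1 hx, not_le.1 hy⟩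
          exact h' x y this h2 h3 fun s hs => h4 s (by simp [hs]))
  exact h.mono (by gcongr) fun _ _ _ _ _ => id

theorem norm_integral_le {g : ℝ → ℂ} {M : ℝ} (hab : a ≤ b) (hM : 0 ≤ M)
    (hg : ContinuousOn g (Set.Icc a b))
    (h : SplitsInto K (fun c d => ‖∫ x in c..d, g x‖ ≤ M) a b) :
    ‖∫ x in a..b, g x‖ ≤ (K + 1) * M := by
  obtain ⟨k, hk, h⟩ := h.glue (r := fun k c d => ‖∫ x in c..d, g x‖ ≤ (k + 1) * M) hab
    (fun c d _ _ _ h => by simpa using h) (by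
      intro i j c t d h1 h2 h3 h4 hi hj
      have hinteg : ∀ u v, a ≤ u → u ≤ v → v ≤ b → IntervalIntegrable g volume u v :=
        fun u v h1 h2 h3 => (hg.mono (by
          rw [Set.uIcc_of_le h2]; exact Set.Icc_subset_Icc h1 h3)).intervalIntegrable
      rw [← intervalIntegral.integral_add_adjacent_intervals (hinteg c t h1 h2 (h3.trans h4))
        (hinteg t d (h1.trans h2) h3 h4)]
      refine (norm_add_le _ _).trans ((add_le_add hi hj).trans (le_of_eq ?_))
      push_cast
      ring)
  refine h.trans ?_
  gcongr

end SplitsInto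

theorem MonotoneOn.splitsInto_level {g : ℝ → ℝ} {a b : ℝ} (hg : MonotoneOn g (Set.Ioo a b))
    (v : ℝ) : SplitsInto 1 (fun c d => (∀ x ∈ Set.Ioo c d, g x ≤ v) ∨
      ∀ x ∈ Set.Ioo c d, v ≤ g x) a b := by
  by_cases hne : {x ∈ Set.Ioo a b | g x ≤ v}.Nonempty
  · refine ⟨{sSup {x ∈ Set.Ioo a b | g x ≤ v}}, by simp, fun c d h1 h2 h3 h4 => ?_⟩
    have hbdd : BddAbove {x ∈ Set.Ioo a b | g x ≤ v} := ⟨b, fun x hx => hx.1.2.le⟩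
    have ht := h4 _ (Finset.mem_singleton_self _)
    by_cases hd : d ≤ sSup {x ∈ Set.Ioo a b | g x ≤ v}
    · left
      intro x hx
      obtain ⟨y, hy, hxy⟩ := exists_lt_of_lt_csSup hne (hx.2.trans_le hd)
      exact (hg ⟨h1.trans_lt hx.1, hx.2.trans_le h3⟩ hy.1 hxy.le).trans hy.2
    · right
      intro x hx
      by_contra hlt
      have hc : sSup {x ∈ Set.Ioo a b | g x ≤ v} ≤ c := by
        by_contra hc
        exact ht ⟨not_le.1 hc, not_le.1 hd⟩
      have := le_csSup hbdd
        (show x ∈ {x ∈ Set.Ioo a b | g x ≤ v} from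
          ⟨⟨h1.trans_lt hx.1, hx.2.trans_le h3⟩, (not_le.1 hlt).le⟩)
      linarith [hx.1]
  · refine ⟨∅, by simp, fun c d h1 h2 h3 _ => Or.inr fun x hx => ?_⟩
    by_contra hlt
    exact hne ⟨x, ⟨h1.trans_lt hx.1, hx.2.trans_le h3⟩, (not_le.1 hlt).le⟩

theorem splitsInto_level {g : ℝ → ℝ} {a b : ℝ}
    (hg : MonotoneOn g (Set.Ioo a b) ∨ AntitoneOn g (Set.Ioo a b)) (v : ℝ) :
    SplitsInto 1 (fun c d => (∀ x ∈ Set.Ioo c d, g x ≤ v) ∨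
      ∀ x ∈ Set.Ioo c d, v ≤ g x) a b := by
  rcases hg with hg | hg
  · exact hg.splitsInto_level v
  · refine (hg.neg.splitsInto_level (-v)).mono le_rfl fun c d _ _ _ h => ?_
    simpa [or_comm] using h

/-- A monotone function crosses the roots of a polynomial of degree `n` at most `n` times. -/
theorem splitsInto_eval {g : ℝ → ℝ} {a b : ℝ}
    (hg : MonotoneOn g (Set.Ioo a b) ∨ AntitoneOn g (Set.Ioo a b)) (R : Polynomial ℝ) {n : ℕ}
    (hn : R.natDegree ≤ n) :
    SplitsInto n (fun c d => SingleSignedOn (fun x => R.eval (g x)) (Set.Ioo c d)) a b := by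
  by_cases hR : R = 0
  · exact ⟨∅, by simp, fun c d _ _ _ _ => Or.inl fun x _ => by simp [hR]⟩
  refine (SplitsInto.forall_mem_finset R.roots.toFinset
    fun r _ => splitsInto_level hg r).mono ?_ fun c d _ _ _ h => ?_
  · exact (Multiset.toFinset_card_le _).trans (R.card_roots'.trans hn)
  · by_contra hs
    simp only [SingleSignedOn] at hs
    push Not at hs
    obtain ⟨⟨x, hx, hxn⟩, ⟨y, hy, hyp⟩⟩ := hs
    have hroot : ∃ r ∈ Set.uIcc (g x) (g y), R.eval r = 0 := by
      have := intermediate_value_uIcc (a := g x) (b := g y) (f := fun z => R.eval z)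
        R.continuous.continuousOn
      exact this (Set.mem_uIcc.2 (Or.inl ⟨hxn.le, hyp.le⟩))
    obtain ⟨r, hr, hr0⟩ := hroot
    have hxr : g x ≠ r := fun h => by rw [h, hr0] at hxn; exact lt_irrefl _ hxn
    have hyr : g y ≠ r := fun h => by rw [h, hr0] at hyp; exact lt_irrefl _ hyp
    rw [Set.mem_uIcc] at hr
    rcases h r (by simp [hR, hr0]) with h | h
    · have h1 := lt_of_le_of_ne (h x hx) hxr
      have h2 := lt_of_le_of_ne (h y hy) hyr
      rcases hr with hr | hr <;> linarith [hr.1, hr.2]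
    · have h1 := lt_of_le_of_ne (h x hx) hxr.symm
      have h2 := lt_of_le_of_ne (h y hy) hyr.symm
      rcases hr with hr | hr <;> linarith [hr.1, hr.2]

theorem SingleSignedOn.monotoneOn_or_antitoneOn {g g' : ℝ → ℝ} {c d : ℝ}
    (h : SingleSignedOn g' (Set.Ioo c d))
    (hg : ∀ x ∈ Set.Ioo c d, HasDerivAt g (g' x) x) :
    MonotoneOn g (Set.Ioo c d) ∨ AntitoneOn g (Set.Ioo c d) := by
  have hc : ContinuousOn g (Set.Ioo c d) := fun x hx => (hg x hx).continuousAt.continuousWithinAt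
  rcases h with h | h
  · left
    refine monotoneOn_of_deriv_nonneg (convex_Ioo c d) hc ?_ ?_ <;> rw [interior_Ioo]
    · exact fun x hx => (hg x hx).differentiableAt.differentiableWithinAt
    · exact fun x hx => by rw [(hg x hx).deriv]; exact h x hx
  · right
    refine antitoneOn_of_deriv_nonpos (convex_Ioo c d) hc ?_ ?_ <;> rw [interior_Ioo]
    · exact fun x hx => (hg x hx).differentiableAt.differentiableWithinAt
    · exact fun x hx => by rw [(hg x hx).deriv]; exact h x hx

/-- If the `j`-th derivative is single-signed, then the function splits into fewer than `2 ^ j`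
single-signed pieces. -/
theorem splitsInto_singleSigned {a b : ℝ} (hab : a ≤ b) (j : ℕ) (F : ℕ → ℝ → ℝ)
    (hF : ∀ k, ∀ x ∈ Set.Ioo a b, HasDerivAt (F k) (F (k + 1) x) x) (k : ℕ)
    (hs : SingleSignedOn (F (k + j)) (Set.Ioo a b)) :
    SplitsInto (2 ^ j - 1) (fun c d => SingleSignedOn (F k) (Set.Ioo c d)) a b := by
  induction j generalizing k with
  | zero =>
    refine ⟨∅, by simp, fun c d h1 _ h3 _ => ?_⟩
    exact hs.imp (fun h x hx => h x (Set.Ioo_subset_Ioo h1 h3 hx))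
      (fun h x hx => h x (Set.Ioo_subset_Ioo h1 h3 hx))
  | succ j ih =>
    have := ih (k + 1) (by rwa [add_assoc, add_comm 1 j])
    have h2 : SplitsInto (2 ^ j - 1) (SplitsInto 1 fun c d => SingleSignedOn (F k) (Set.Ioo c d))
        a b := by
      refine this.mono le_rfl fun c d h1 _ h3 h => ?_
      refine (splitsInto_level (h.monotoneOn_or_antitoneOn
        fun x hx => hF k x (Set.Ioo_subset_Ioo h1 h3 hx)) 0).mono le_rfl fun _ _ _ _ _ => Or.symm
    refine (h2.bind hab).mono ?_ fun _ _ _ _ _ => id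
    have := Nat.one_le_two_pow (n := j)
    rw [pow_succ]
    omega

theorem SingleSignedOn.integral_abs_le {u u' : ℝ → ℝ} {c d U : ℝ} (hcd : c ≤ d)
    (h : SingleSignedOn u' (Set.Ioo c d)) (hu : ContinuousOn u (Set.Icc c d))
    (hu' : ContinuousOn u' (Set.Icc c d)) (hd : ∀ x ∈ Set.Ioo c d, HasDerivAt u (u' x) x)
    (hU : ∀ x ∈ Set.Icc c d, |u x| ≤ U) : ∫ x in c..d, |u' x| ≤ 2 * U := by
  have hinteg : IntervalIntegrable u' volume c d :=
    (by rwa [Set.uIcc_of_le hcd] : ContinuousOn u' (Set.uIcc c d)).intervalIntegrable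
  have hftc := intervalIntegral.integral_eq_sub_of_hasDerivAt_of_le hcd hu hd hinteg
  have h1 := abs_le.1 (hU c ⟨le_rfl, hcd⟩)
  have h2 := abs_le.1 (hU d ⟨hcd, le_rfl⟩)
  rcases h with h | h
  · rw [intervalIntegral.integral_of_le hcd, integral_Ioc_eq_integral_Ioo,
      setIntegral_congr_fun measurableSet_Ioo (fun x hx => abs_of_nonneg (h x hx)),
      ← integral_Ioc_eq_integral_Ioo, ← intervalIntegral.integral_of_le hcd, hftc]
    linarith
  · rw [intervalIntegral.integral_of_le hcd, integral_Ioc_eq_integral_Ioo,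
      setIntegral_congr_fun measurableSet_Ioo (fun x hx => abs_of_nonpos (h x hx)),
      ← integral_Ioc_eq_integral_Ioo, ← intervalIntegral.integral_of_le hcd,
      intervalIntegral.integral_neg, hftc]
    linarith

/-- A first-derivative test for oscillatory integrals: the reciprocal of the derivative of the
phase is a product of two bounded monotone functions. -/
theorem norm_integral_exp_le_of_reciprocal_deriv {F F' u u' v v' : ℝ → ℝ} {c d U V lam : ℝ}
    (hcd : c ≤ d) (hlam : lam ≠ 0)
    (hF : ContinuousOn F (Set.Icc c d)) (hF' : ContinuousOn F' (Set.Icc c d))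
    (hdF : ∀ x ∈ Set.Ioo c d, HasDerivAt F (F' x) x)
    (hu : ContinuousOn u (Set.Icc c d)) (hu' : ContinuousOn u' (Set.Icc c d))
    (hdu : ∀ x ∈ Set.Ioo c d, HasDerivAt u (u' x) x)
    (hv : ContinuousOn v (Set.Icc c d)) (hv' : ContinuousOn v' (Set.Icc c d))
    (hdv : ∀ x ∈ Set.Ioo c d, HasDerivAt v (v' x) x)
    (huv : ∀ x ∈ Set.Icc c d, u x * v x * F' x = 1)
    (hU : ∀ x ∈ Set.Icc c d, |u x| ≤ U) (hV : ∀ x ∈ Set.Icc c d, |v x| ≤ V)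
    (hsu : SingleSignedOn u' (Set.Ioo c d)) (hsv : SingleSignedOn v' (Set.Ioo c d)) :
    ‖∫ x in c..d, Complex.exp (Complex.I * (lam : ℂ) * (F x : ℂ))‖ ≤ 6 * (U * V) / |lam| := by
  have hU0 : 0 ≤ U := (abs_nonneg _).trans (hU c ⟨le_rfl, hcd⟩)
  have hV0 : 0 ≤ V := (abs_nonneg _).trans (hV c ⟨le_rfl, hcd⟩)
  have hlamC : (lam : ℂ) ≠ 0 := by exact_mod_cast hlam
  have hmm : Set.Ioo (min c d) (max c d) = Set.Ioo c d := by simp [hcd]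
  have hexp (x : ℝ) : ‖Complex.exp (Complex.I * (lam : ℂ) * (F x : ℂ))‖ = 1 := by
    rw [show Complex.I * (lam : ℂ) * (F x : ℂ) = ((lam * F x : ℝ) : ℂ) * Complex.I by
      push_cast; ring]
    exact Complex.norm_exp_ofReal_mul_I _
  have hcE : ContinuousOn (fun x => Complex.exp (Complex.I * (lam : ℂ) * (F x : ℂ)))
      (Set.Icc c d) := by fun_prop
  set g : ℝ → ℂ := fun x => ((u x * v x : ℝ) : ℂ) with hg
  set g' : ℝ → ℂ := fun x => ((u' x * v x + u x * v' x : ℝ) : ℂ) with hg'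
  have hcg : ContinuousOn g (Set.Icc c d) := by fun_prop
  have hcg' : ContinuousOn g' (Set.Icc c d) := by fun_prop
  have hparts := intervalIntegral.integral_mul_deriv_eq_deriv_mul_of_hasDerivAt
    (a := c) (b := d) (u := g) (u' := g')
    (v := fun x => Complex.exp (Complex.I * (lam : ℂ) * (F x : ℂ)))
    (v' := fun x => Complex.exp (Complex.I * (lam : ℂ) * (F x : ℂ)) *
      (Complex.I * (lam : ℂ) * (F' x : ℂ)))
    (by rwa [Set.uIcc_of_le hcd]) (by rwa [Set.uIcc_of_le hcd])
    (by
      rw [hmm]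
      intro x hx
      exact ((hdu x hx).mul (hdv x hx)).ofReal_comp)
    (by
      rw [hmm]
      intro x hx
      exact (((hdF x hx).ofReal_comp).const_mul _).cexp)
    (by
      apply ContinuousOn.intervalIntegrable
      rwa [Set.uIcc_of_le hcd])
    (by
      apply ContinuousOn.intervalIntegrable
      rw [Set.uIcc_of_le hcd]
      fun_prop)
  have hleft : ∫ x in c..d, g x * (Complex.exp (Complex.I * (lam : ℂ) * (F x : ℂ)) *
      (Complex.I * (lam : ℂ) * (F' x : ℂ))) =
      (Complex.I * (lam : ℂ)) * ∫ x in c..d, Complex.exp (Complex.I * (lam : ℂ) * (F x : ℂ)) := by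
    rw [← intervalIntegral.integral_const_mul]
    apply intervalIntegral.integral_congr
    intro x hx
    rw [Set.uIcc_of_le hcd] at hx
    have h1 : g x * (F' x : ℂ) = 1 := by
      simp only [hg]
      exact_mod_cast huv x hx
    linear_combination (Complex.exp (Complex.I * (lam : ℂ) * (F x : ℂ)) *
      (Complex.I * (lam : ℂ))) * h1
  rw [hleft] at hparts
  have hgb (x : ℝ) (hx : x ∈ Set.Icc c d) : ‖g x‖ ≤ U * V := by
    simp only [hg, Complex.norm_real, Real.norm_eq_abs, abs_mul]
    exact mul_le_mul (hU x hx) (hV x hx) (abs_nonneg _) hU0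
  have hinteg {w : ℝ → ℝ} (hw : ContinuousOn w (Set.Icc c d)) :
      IntervalIntegrable w volume c d := by
    apply ContinuousOn.intervalIntegrable
    rwa [Set.uIcc_of_le hcd]
  have hrest : ‖∫ x in c..d, g' x * Complex.exp (Complex.I * (lam : ℂ) * (F x : ℂ))‖ ≤
      4 * (U * V) := by
    calc _ ≤ ∫ x in c..d, (|u' x| * V + U * |v' x|) := by
          apply intervalIntegral.norm_integral_le_of_norm_le hcd
          · refine Filter.Eventually.of_forall fun x hx => ?_
            have hx' : x ∈ Set.Icc c d := ⟨hx.1.le, hx.2⟩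
            rw [norm_mul, hexp, mul_one]
            simp only [hg', Complex.norm_real, Real.norm_eq_abs]
            refine (abs_add_le _ _).trans ?_
            rw [abs_mul, abs_mul]
            gcongr
            · exact hV x hx'
            · exact hU x hx'
          · exact hinteg (by fun_prop)
      _ = (∫ x in c..d, |u' x|) * V + U * ∫ x in c..d, |v' x| := by
          rw [intervalIntegral.integral_add (hinteg (by fun_prop)) (hinteg (by fun_prop)),
            intervalIntegral.integral_mul_const, intervalIntegral.integral_const_mul]
      _ ≤ 2 * U * V + U * (2 * V) := by
          gcongr
          · exact hsu.integral_abs_le hcd hu hu' hdu hU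
          · exact hsv.integral_abs_le hcd hv hv' hdv hV
      _ = 4 * (U * V) := by ring
  have hnorm := congrArg norm hparts
  rw [norm_mul, norm_mul, Complex.norm_I, one_mul, Complex.norm_real, Real.norm_eq_abs] at hnorm
  rw [le_div_iff₀ (abs_pos.2 hlam), mul_comm, hnorm]
  refine (norm_sub_le _ _).trans ?_
  have h3 := norm_sub_le (g d * Complex.exp (Complex.I * (lam : ℂ) * (F d : ℂ)))
    (g c * Complex.exp (Complex.I * (lam : ℂ) * (F c : ℂ)))
  rw [norm_mul, norm_mul, hexp, hexp] at h3
  linarith [hgb c ⟨le_rfl, hcd⟩, hgb d ⟨hcd, le_rfl⟩]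

theorem integrable_abs_rpow_neg_mul_exp_neg_sq {δ : ℝ} (hδ1 : δ < 1) :
    Integrable fun x : ℝ => |x| ^ (-δ) * Real.exp (-x ^ 2) := by
  have h := integrableOn_rpow_mul_exp_neg_mul_sq one_pos (s := -δ) (by linarith)
  have hpos : IntegrableOn (fun x : ℝ => |x| ^ (-δ) * Real.exp (-x ^ 2)) (Set.Ioi 0) := by
    refine h.congr_fun (fun x hx => ?_) measurableSet_Ioi
    simp [abs_of_pos (Set.mem_Ioi.1 hx)]
  rw [← integrableOn_univ, ← Set.Iic_union_Ioi (a := (0 : ℝ)), integrableOn_union]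
  refine ⟨?_, hpos⟩
  rw [← (Measure.measurePreserving_neg (volume : Measure ℝ)).integrableOn_comp_preimage
    (Homeomorph.neg ℝ).measurableEmbedding]
  simpa [Function.comp_def, integrableOn_Ici_iff_integrableOn_Ioi] using hpos

/-- Decay of the oscillatory integrals of `f` controls the length of intervals on which `f` is
nearly constant. -/
theorem exists_length_le_of_decay {δ : ℝ} (hδ1 : δ < 1) :
    ∃ C : ℝ, 0 < C ∧ ∀ (a b : ℝ) (f : ℝ → ℝ) (A : ℝ), 0 ≤ A → ContinuousOn f (Set.Icc a b) →
      (∀ lam : ℝ, lam ≠ 0 →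
        ‖∫ x in Set.Icc a b, Complex.exp (Complex.I * (lam : ℂ) * (f x : ℂ))‖ ≤
          A * |lam| ^ (-δ)) →
      ∀ c d y ε : ℝ, a ≤ c → c ≤ d → d ≤ b → 0 < ε → (∀ x ∈ Set.Icc c d, |f x - y| ≤ ε) →
        d - c ≤ C * A * ε ^ δ := by
  set J : ℝ := ∫ x : ℝ, |x| ^ (-δ) * Real.exp (-x ^ 2) with hJ
  set κ : ℝ := Real.sqrt Real.pi * Real.exp (-(1 / 4)) with hκ
  have hκ0 : 0 < κ := by positivity
  have hJ0 : 0 ≤ J := integral_nonneg fun x => by positivity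
  refine ⟨J / κ + 1, by positivity, ?_⟩
  intro a b f A hA hf hdec c d y ε hac hcd hdb hε hy
  set t : ℝ → ℝ := fun x => (f x - y) / ε with ht
  have htc : ContinuousOn t (Set.Icc a b) := by fun_prop
  have hgauss (x : ℝ) : ∫ ξ : ℝ, Complex.exp (Complex.I * (t x : ℂ) * ξ) *
      Complex.exp (-(ξ : ℂ) ^ 2) =
      ((Real.sqrt Real.pi * Real.exp (-(t x) ^ 2 / 4) : ℝ) : ℂ) := by
    have := fourierIntegral_gaussian (b := 1) (by simp) (t x : ℂ)
    simp only [neg_mul, one_mul, div_one, mul_one] at this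
    rw [this, Real.sqrt_eq_rpow]
    push_cast
    rw [Complex.ofReal_cpow Real.pi_pos.le]
    push_cast
    rfl
  have hnormE (s ξ : ℝ) : ‖Complex.exp (Complex.I * (s : ℂ) * ξ)‖ = 1 := by
    rw [show Complex.I * (s : ℂ) * (ξ : ℂ) = ((s * ξ : ℝ) : ℂ) * Complex.I by push_cast; ring]
    exact Complex.norm_exp_ofReal_mul_I _
  have hnormG (ξ : ℝ) : ‖Complex.exp (-(ξ : ℂ) ^ 2)‖ = Real.exp (-ξ ^ 2) := by
    rw [show -(ξ : ℂ) ^ 2 = ((-ξ ^ 2 : ℝ) : ℂ) by push_cast; ring, ← Complex.ofReal_exp,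
      Complex.norm_real, Real.norm_eq_abs, abs_of_pos (Real.exp_pos _)]
  have hgi : Integrable fun ξ : ℝ => Real.exp (-ξ ^ 2) := by
    simpa using integrable_exp_neg_mul_sq one_pos
  have hprod : Integrable (Function.uncurry fun (x ξ : ℝ) =>
      Complex.exp (Complex.I * (t x : ℂ) * ξ) * Complex.exp (-(ξ : ℂ) ^ 2))
      ((volume.restrict (Set.Icc a b)).prod volume) := by
    have hbound := (integrable_const (μ := volume.restrict (Set.Icc a b)) (1 : ℝ)).mul_prod hgi
    refine hbound.mono' ?_ ?_
    · have hm : AEMeasurable t (volume.restrict (Set.Icc a b)) :=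
        htc.aemeasurable measurableSet_Icc
      have hm' : AEMeasurable (fun p : ℝ × ℝ => t p.1)
        ((volume.restrict (Set.Icc a b)).prod volume) := hm.comp_fst
      apply AEMeasurable.aestronglyMeasurable
      simp only [Function.uncurry_def]
      fun_prop
    · refine Filter.Eventually.of_forall fun p => ?_
      simp only [Function.uncurry_def, norm_mul, hnormE, hnormG]
      exact le_rfl
  have hswap := integral_integral_swap hprod
  have hinner (ξ : ℝ) : ∫ x in Set.Icc a b, Complex.exp (Complex.I * (t x : ℂ) * ξ) *
      Complex.exp (-(ξ : ℂ) ^ 2) =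
      (Complex.exp (Complex.I * ((-y / ε : ℝ) : ℂ) * ξ) * Complex.exp (-(ξ : ℂ) ^ 2)) *
      ∫ x in Set.Icc a b, Complex.exp (Complex.I * ((ξ / ε : ℝ) : ℂ) * (f x : ℂ)) := by
    rw [← integral_const_mul]
    congr 1
    ext x
    rw [← Complex.exp_add, ← Complex.exp_add, ← Complex.exp_add]
    congr 1
    simp only [ht]
    push_cast
    ring
  have hup : ‖∫ ξ : ℝ, ∫ x in Set.Icc a b, Complex.exp (Complex.I * (t x : ℂ) * ξ) *
      Complex.exp (-(ξ : ℂ) ^ 2)‖ ≤ A * ε ^ δ * J := by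
    rw [hJ, ← integral_const_mul]
    refine norm_integral_le_of_norm_le
      ((integrable_abs_rpow_neg_mul_exp_neg_sq hδ1).const_mul _) ?_
    filter_upwards [Measure.ae_ne volume (0 : ℝ)] with ξ hξ
    rw [hinner, norm_mul, norm_mul, hnormE, hnormG, one_mul]
    have h1 := hdec (ξ / ε) (div_ne_zero hξ hε.ne')
    rw [abs_div, abs_of_pos hε, Real.div_rpow (abs_nonneg _) hε.le, Real.rpow_neg hε.le δ,
      div_inv_eq_mul] at h1
    calc _ ≤ Real.exp (-ξ ^ 2) * (A * (|ξ| ^ (-δ) * ε ^ δ)) := by gcongr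
      _ = _ := by ring
  rw [← hswap] at hup
  simp only [hgauss] at hup
  rw [integral_complex_ofReal, Complex.norm_real, Real.norm_eq_abs] at hup
  have hφc : ContinuousOn (fun x => Real.sqrt Real.pi * Real.exp (-(t x) ^ 2 / 4))
      (Set.Icc a b) := by fun_prop
  have hlow : (d - c) * κ ≤ ∫ x in Set.Icc a b, Real.sqrt Real.pi * Real.exp (-(t x) ^ 2 / 4) := by
    calc (d - c) * κ = ∫ x in Set.Icc c d, κ := by simp [hcd]
      _ ≤ ∫ x in Set.Icc c d, Real.sqrt Real.pi * Real.exp (-(t x) ^ 2 / 4) := by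
        refine setIntegral_mono_on (by simp) ((hφc.mono
          (Set.Icc_subset_Icc hac hdb)).integrableOn_Icc) measurableSet_Icc fun x hx => ?_
        have h1 : |t x| ≤ 1 := by
          rw [ht]
          simp only [abs_div, abs_of_pos hε]
          exact (div_le_one hε).2 (hy x hx)
        have h2 : (t x) ^ 2 ≤ 1 := by rwa [sq_le_one_iff_abs_le_one]
        rw [hκ]
        gcongr
        linarith
      _ ≤ _ := setIntegral_mono_set hφc.integrableOn_Icc
        (Filter.Eventually.of_forall fun x => by positivity)
        (Set.Icc_subset_Icc hac hdb).eventuallyLE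
  have h1 : (d - c) * κ ≤ A * ε ^ δ * J := hlow.trans ((le_abs_self _).trans hup)
  have h2 : d - c ≤ A * ε ^ δ * J / κ := by rwa [le_div_iff₀ hκ0]
  refine h2.trans ?_
  have h3 : 0 ≤ A * ε ^ δ := by positivity
  calc A * ε ^ δ * J / κ ≤ A * ε ^ δ * J / κ + A * ε ^ δ := by linarith
    _ = _ := by ring

open Polynomial in
theorem abs_coeff_taylor_le {p : ℝ[X]} {m : ℕ} (hp : p.natDegree ≤ m) {M R r : ℝ}
    (hM : ∀ i, |p.coeff i| ≤ M) (hr : |r| ≤ R) (hR : 1 ≤ R) (j : ℕ) :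
    |(taylor r p).coeff j| ≤ (m + 1) * 2 ^ m * R ^ m * M := by
  have hM0 : 0 ≤ M := (abs_nonneg _).trans (hM 0)
  rw [taylor_coeff, eval_eq_sum_range' (n := m + 1)
    (by have := natDegree_hasseDeriv_le p j; omega)]
  refine (Finset.abs_sum_le_sum_abs _ _).trans ?_
  have hterm : ∀ i ∈ Finset.range (m + 1), |(hasseDeriv j p).coeff i * r ^ i| ≤
      2 ^ m * R ^ m * M := by
    intro i hi
    rw [hasseDeriv_coeff]
    by_cases hij : i + j ≤ m
    · rw [abs_mul, abs_mul, abs_pow, Nat.abs_cast]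
      have h1 : (((i + j).choose j : ℕ) : ℝ) ≤ 2 ^ m := by
        exact_mod_cast (Nat.choose_le_two_pow _ _).trans (Nat.pow_le_pow_right (by norm_num) hij)
      have h2 : |r| ^ i ≤ R ^ m :=
        (pow_le_pow_left₀ (abs_nonneg _) hr i).trans (pow_le_pow_right₀ hR (by omega))
      calc _ ≤ 2 ^ m * M * R ^ m := by
            gcongr
            exact hM _
        _ = _ := by ring
    · rw [coeff_eq_zero_of_natDegree_lt (n := i + j) (by omega)]
      simp only [mul_zero, zero_mul, abs_zero]
      positivity
  calc _ ≤ ∑ i ∈ Finset.range (m + 1), 2 ^ m * R ^ m * M := Finset.sum_le_sum hterm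
    _ = _ := by
      rw [Finset.sum_const, Finset.card_range, nsmul_eq_mul]
      push_cast
      ring

open Polynomial in
theorem coeff_iterate_divX (p : ℝ[X]) (k n : ℕ) : (divX^[k] p).coeff n = p.coeff (n + k) := by
  induction k generalizing n with
  | zero => rfl
  | succ k ih => rw [Function.iterate_succ_apply', coeff_divX, ih]; congr 1; ring

open Polynomial in
/-- Hermite interpolation: the `k`-th coefficient of a polynomial of degree at most `m` is
controlled by its lower coefficients and its first `m - k` Taylor coefficients at `1`. -/
theorem abs_coeff_le_of_taylor_one {p : ℝ[X]} {m k : ℕ} (hp : p.natDegree ≤ m) (hk : k ≤ m)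
    {M : ℝ} (hlow : ∀ l < k, |p.coeff l| ≤ M)
    (htay : ∀ j ≤ m - k, |(taylor 1 p).coeff j| ≤ M) (hM : 0 ≤ M) :
    |p.coeff k| ≤ (m + 1) * (1 + (m + 1) * 2 ^ m) * (1 + 2 ^ m) ^ m * M := by
  set S := divX^[k] p with hS
  set low := p - X ^ k * S with hlowdef
  have hcoeff (l : ℕ) : low.coeff l = if l < k then p.coeff l else 0 := by
    rw [hlowdef, coeff_sub, coeff_X_pow_mul']
    by_cases h : k ≤ l
    · simp [h, hS, coeff_iterate_divX, not_lt.2 h]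
    · simp [h, not_le.1 h]
  have hlowdeg : low.natDegree ≤ m := by
    rw [natDegree_le_iff_coeff_eq_zero]
    intro l hl
    rw [hcoeff, if_neg (by omega)]
  have hlowM (i : ℕ) : |low.coeff i| ≤ M := by
    rw [hcoeff]
    split_ifs with h
    · exact hlow i h
    · simpa using hM
  have hlowtay (j : ℕ) : |(taylor 1 low).coeff j| ≤ (m + 1) * 2 ^ m * M := by
    simpa using abs_coeff_taylor_le (r := 1) (R := 1) hlowdeg hlowM (by simp) le_rfl j
  have hSdeg : S.natDegree ≤ m - k := by
    rw [natDegree_le_iff_coeff_eq_zero]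
    intro l hl
    rw [hS, coeff_iterate_divX]
    exact coeff_eq_zero_of_natDegree_lt (by omega)
  set s := taylor 1 S with hs
  have hdecomp : taylor 1 p = taylor 1 low + s * (X + 1) ^ k := by
    have : p = low + S * X ^ k := by rw [hlowdef]; ring
    conv_lhs => rw [this]
    rw [map_add, taylor_mul, taylor_X_pow, map_one]
  set M' := (1 + (m + 1) * 2 ^ m) * M with hM'
  have hM'0 : 0 ≤ M' := by positivity
  have hrec (j : ℕ) (hj : j ≤ m - k) : |s.coeff j| ≤ M' * (1 + 2 ^ m) ^ j := by
    induction j using Nat.strong_induction_on with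
    | _ j ih =>
      have h1 : (taylor 1 p).coeff j - (taylor 1 low).coeff j =
          ∑ i ∈ Finset.range j, s.coeff i * (k.choose (j - i) : ℝ) + s.coeff j := by
        rw [hdecomp, coeff_add, coeff_mul,
          Finset.Nat.sum_antidiagonal_eq_sum_range_succ_mk, Finset.sum_range_succ]
        simp only [coeff_X_add_one_pow]
        simp
      have h2 : |∑ i ∈ Finset.range j, s.coeff i * (k.choose (j - i) : ℝ)| ≤
          ∑ i ∈ Finset.range j, M' * (1 + 2 ^ m) ^ i * 2 ^ m := by
        refine (Finset.abs_sum_le_sum_abs _ _).trans (Finset.sum_le_sum fun i hi => ?_)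
        rw [Finset.mem_range] at hi
        rw [abs_mul, Nat.abs_cast]
        have h3 : ((k.choose (j - i) : ℕ) : ℝ) ≤ 2 ^ m := by
          exact_mod_cast (Nat.choose_le_two_pow _ _).trans (Nat.pow_le_pow_right (by norm_num) hk)
        have := ih i hi (by omega)
        gcongr
      have h4 : ∑ i ∈ Finset.range j, M' * (1 + (2 : ℝ) ^ m) ^ i * 2 ^ m =
          M' * ((1 + 2 ^ m) ^ j - 1) := by
        have := geom_sum_mul (1 + (2 : ℝ) ^ m) j
        rw [add_sub_cancel_left] at this
        rw [← this, Finset.sum_mul, Finset.mul_sum]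
        exact Finset.sum_congr rfl fun i _ => by ring
      have h5 := htay j hj
      have h6 := hlowtay j
      rw [h4] at h2
      have h7 : s.coeff j = (taylor 1 p).coeff j - (taylor 1 low).coeff j -
          ∑ i ∈ Finset.range j, s.coeff i * (k.choose (j - i) : ℝ) := by linarith
      rw [h7]
      refine (abs_sub _ _).trans ((add_le_add (abs_sub _ _) h2).trans ?_)
      rw [hM'] at *
      linarith
  have hval : p.coeff k = s.eval (-1) := by
    rw [hs, taylor_eval, neg_add_cancel, ← coeff_zero_eq_eval_zero, hS, coeff_iterate_divX,
      zero_add]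
  rw [hval, eval_eq_sum_range' (n := m - k + 1) (by rw [hs, natDegree_taylor]; omega)]
  refine (Finset.abs_sum_le_sum_abs _ _).trans ?_
  calc _ ≤ ∑ i ∈ Finset.range (m - k + 1), M' * (1 + 2 ^ m) ^ m := by
        refine Finset.sum_le_sum fun i hi => ?_
        rw [Finset.mem_range] at hi
        rw [abs_mul, abs_pow, abs_neg, abs_one, one_pow, mul_one]
        refine (hrec i (by omega)).trans ?_
        gcongr
        · linarith [pow_pos (two_pos : (0 : ℝ) < 2) m]
        · omega
    _ ≤ (m + 1) * (M' * (1 + 2 ^ m) ^ m) := by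
        rw [Finset.sum_const, Finset.card_range, nsmul_eq_mul]
        gcongr
        exact_mod_cast (by omega : m - k + 1 ≤ m + 1)
    _ = _ := by rw [hM']; ring

open Polynomial in
/-- Wherever an SND polynomial is at most `1`, one of its higher Taylor coefficients is bounded
below by a constant depending only on the degree. -/
theorem IsSND.exists_le_abs_coeff_taylor (m : ℕ) (hm : 1 ≤ m) :
    ∃ ε : ℝ, 0 < ε ∧ ∀ Q : ℝ[X], Q.natDegree = m → IsSND Q → ∀ y : ℝ, |Q.eval y| ≤ 1 →
      ∃ j, 1 ≤ j ∧ j ≤ m ∧ ε ≤ |(taylor y Q).coeff j| := by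
  set D : ℝ := (m + 1) * 2 ^ m with hD
  set H : ℝ := (m + 1) * (1 + (m + 1) * 2 ^ m) * (1 + 2 ^ m) ^ m with hH
  have hD0 : 0 < D := by positivity
  have hH1 : 1 ≤ H := by
    have h1 : (1 : ℝ) ≤ m + 1 := by linarith [(Nat.cast_nonneg m : (0 : ℝ) ≤ m)]
    have h2 : (1 : ℝ) ≤ 1 + (m + 1) * 2 ^ m := by linarith
    have h3 : (1 : ℝ) ≤ (1 + 2 ^ m) ^ m :=
      one_le_pow₀ (by linarith [pow_pos (two_pos : (0 : ℝ) < 2) m])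
    exact one_le_mul_of_one_le_of_one_le (one_le_mul_of_one_le_of_one_le h1 h2) h3
  have hH0 : 0 < H := by linarith
  have hE0 : 0 < D * (4 * H) ^ m := by positivity
  refine ⟨min (1 / (4 * H)) (1 / (2 * (D * (4 * H) ^ m))), by positivity, ?_⟩
  set ε := min (1 / (4 * H)) (1 / (2 * (D * (4 * H) ^ m))) with hε
  have hε0 : 0 ≤ ε := by positivity
  have hε1 : H * ε ≤ 1 / 4 := by
    calc H * ε ≤ H * (1 / (4 * H)) := by gcongr; exact min_le_left _ _
      _ = 1 / 4 := by field_simp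
  have hε2 : D * (4 * H) ^ m * ε ≤ 1 / 2 := by
    calc D * (4 * H) ^ m * ε ≤ D * (4 * H) ^ m * (1 / (2 * (D * (4 * H) ^ m))) := by
          gcongr; exact min_le_right _ _
      _ = 1 / 2 := by field_simp
  rintro Q hQm ⟨hQ1, i, hi, hQi⟩ y hy
  rw [hQm] at hi hQi
  set k := m - i with hk
  by_contra! hcon
  have hb0 : |(taylor y Q).coeff 0| ≤ 1 := by rwa [taylor_coeff_zero]
  rcases le_or_gt |y| (4 * H) with hyR | hyR
  · set B := taylor y Q - C (Q.eval y) with hB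
    have hBdeg : B.natDegree ≤ m := by
      rw [hB, natDegree_sub_C, natDegree_taylor, hQm]
    have hBc (l : ℕ) : |B.coeff l| ≤ ε := by
      rcases Nat.eq_zero_or_pos l with rfl | hl
      · simpa [hB, taylor_coeff_zero] using hε0
      · rcases le_or_gt l m with hlm | hlm
        · rw [hB, coeff_sub, coeff_C_of_ne_zero hl.ne', sub_zero]
          exact (hcon l hl hlm).le
        · rw [coeff_eq_zero_of_natDegree_lt (by omega), abs_zero]
          exact hε0
    have hQB : taylor (-y) B = Q - C (Q.eval y) := by
      rw [hB, map_sub, taylor_taylor, neg_add_cancel, taylor_zero, taylor_C]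
    have h1 := abs_coeff_taylor_le hBdeg hBc (r := -y) (R := 4 * H) (by rwa [abs_neg])
      (by linarith) k
    rw [hQB, coeff_sub, coeff_C_of_ne_zero (by omega), sub_zero, hQi] at h1
    linarith
  · set R := |y| with hR
    have hR1 : 1 ≤ R := by linarith
    have hR0 : 0 < R := by linarith
    set p := Q.comp (C y * X) with hp
    have hpc (l : ℕ) : |p.coeff l| = |Q.coeff l| * R ^ l := by
      rw [hp, comp_C_mul_X_coeff, abs_mul, abs_pow]
    have hpt : taylor 1 p = (taylor y Q).comp (C y * X) := by
      rw [hp, taylor_apply, taylor_apply, comp_assoc, comp_assoc]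
      congr 1
      simp [mul_add]
    have hptc (l : ℕ) : |(taylor 1 p).coeff l| = |(taylor y Q).coeff l| * R ^ l := by
      rw [hpt, comp_C_mul_X_coeff, abs_mul, abs_pow]
    have hpdeg : p.natDegree ≤ m := by
      rw [natDegree_le_iff_coeff_eq_zero]
      intro l hl
      rw [hp, comp_C_mul_X_coeff, coeff_eq_zero_of_natDegree_lt (by omega), zero_mul]
    have hkk : k = (k - 1) + 1 := by omega
    have hRk : R ^ k = R ^ (k - 1) * R := by
      conv_lhs => rw [hkk, pow_succ]
    have h1 := abs_coeff_le_of_taylor_one hpdeg (k := k) (by omega)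
      (M := R ^ (k - 1) + ε * R ^ k)
      (by
        intro l hl
        rw [hpc]
        have h2 : R ^ l ≤ R ^ (k - 1) := pow_le_pow_right₀ hR1 (by omega)
        have h3 : |Q.coeff l| * R ^ l ≤ 1 * R ^ l := by gcongr; exact hQ1 l
        have : 0 ≤ ε * R ^ k := by positivity
        linarith)
      (by
        intro j hj
        rw [hptc]
        rcases Nat.eq_zero_or_pos j with rfl | hj0
        · have : 0 ≤ ε * R ^ k := by positivity
          have : 1 ≤ R ^ (k - 1) := one_le_pow₀ hR1
          simp only [pow_zero, mul_one]
          linarith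
        · have h2 : R ^ j ≤ R ^ k := pow_le_pow_right₀ hR1 (by omega)
          have h3 := (hcon j hj0 (by omega)).le
          have : 0 ≤ R ^ (k - 1) := by positivity
          have : |(taylor y Q).coeff j| * R ^ j ≤ ε * R ^ k := by gcongr
          linarith)
      (by positivity)
    rw [← hH, hpc, hQi, one_mul] at h1
    have hRk1 : 0 < R ^ (k - 1) := by positivity
    have h4 : H * ε * R ^ k ≤ 1 / 4 * R ^ k := by gcongr
    nlinarith

open Polynomial in
theorem exists_abs_coeff_le_of_abs_eval_le (m : ℕ) :
    ∃ K : ℝ, 0 < K ∧ ∀ (p : ℝ[X]) (τ : ℝ), p.natDegree ≤ m →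
      (∀ z ∈ Set.Icc (0 : ℝ) 1, |p.eval z| ≤ τ) → ∀ j ≤ m, |p.coeff j| ≤ K * τ := by
  set v : ℕ → ℝ := fun i => i / (m + 1) with hv
  set s := Finset.range (m + 1) with hs
  have hinj : Set.InjOn v s := by
    intro i _ j _ hij
    have h0 : (m : ℝ) + 1 ≠ 0 := by positivity
    simp only [hv] at hij
    field_simp at hij
    exact_mod_cast hij
  refine ⟨(∑ i ∈ s, ∑ j ∈ s, |(Lagrange.basis s v i).coeff j|) + 1, by positivity, ?_⟩
  intro p τ hp hτ j hj
  have hτ0 : 0 ≤ τ := (abs_nonneg _).trans (hτ 0 ⟨le_rfl, zero_le_one⟩)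
  have hdeg : p.degree < s.card := by
    rw [hs, Finset.card_range]
    exact (degree_le_of_natDegree_le hp).trans_lt (by exact_mod_cast Nat.lt_succ_self m)
  have hinteg := congrArg (fun q => q.coeff j) (Lagrange.eq_interpolate hinj hdeg)
  simp only [Lagrange.interpolate_apply, finsetSum_coeff, coeff_C_mul] at hinteg
  rw [hinteg]
  refine (Finset.abs_sum_le_sum_abs _ _).trans ?_
  calc _ ≤ ∑ i ∈ s, (∑ j ∈ s, |(Lagrange.basis s v i).coeff j|) * τ := by
        refine Finset.sum_le_sum fun i hi => ?_
        rw [abs_mul, mul_comm]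
        have h1 : |(Lagrange.basis s v i).coeff j| ≤
            ∑ j ∈ s, |(Lagrange.basis s v i).coeff j| :=
          Finset.single_le_sum (f := fun j => |(Lagrange.basis s v i).coeff j|)
            (fun _ _ => abs_nonneg _) (by rw [hs, Finset.mem_range]; omega)
        have h2 : |p.eval (v i)| ≤ τ := by
          apply hτ
          rw [hs, Finset.mem_range] at hi
          have : (i : ℝ) ≤ m + 1 := by exact_mod_cast hi.le
          exact ⟨by positivity, (div_le_one (by positivity)).2 this⟩
        gcongr
    _ ≤ _ := by rw [← Finset.sum_mul, add_mul]; linarith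

open Polynomial in
/-- Intervals on which an SND polynomial of degree `m` is at most `σ ^ m` have length `O(σ)`. -/
theorem IsSND.exists_length_le (m : ℕ) (hm : 1 ≤ m) :
    ∃ K : ℝ, 0 < K ∧ ∀ Q : ℝ[X], Q.natDegree = m → IsSND Q → ∀ σ y h : ℝ, 0 < σ → σ ≤ 1 →
      0 ≤ h → (∀ z ∈ Set.Icc y (y + h), |Q.eval z| ≤ σ ^ m) → h ≤ K * σ := by
  obtain ⟨ε, hε, hjet⟩ := IsSND.exists_le_abs_coeff_taylor m hm
  obtain ⟨K, hK, hinteg⟩ := exists_abs_coeff_le_of_abs_eval_le m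
  refine ⟨K / ε + 1, by positivity, ?_⟩
  intro Q hQm hQ σ y h hσ hσ1 hh hsmall
  obtain ⟨j, hj1, hjm, hj⟩ := hjet Q hQm hQ y
    ((hsmall y ⟨le_rfl, by linarith⟩).trans (pow_le_one₀ hσ.le hσ1))
  have hcoef := hinteg ((taylor y Q).comp (C h * X)) (σ ^ m)
    (by
      refine natDegree_comp_le.trans ?_
      rw [natDegree_taylor, hQm]
      calc m * (C h * X).natDegree ≤ m * 1 := by
            gcongr
            exact (natDegree_C_mul_le _ _).trans natDegree_X_le
        _ = m := mul_one m)
    (by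
      intro z hz
      rw [eval_comp, taylor_eval]
      simp only [eval_mul, eval_C, eval_X]
      apply hsmall
      constructor <;> nlinarith [hz.1, hz.2])
    j hjm
  rw [comp_C_mul_X_coeff, abs_mul, abs_pow, abs_of_nonneg hh] at hcoef
  have h1 : h ^ j ≤ K / ε * σ ^ m := by
    rw [div_mul_eq_mul_div, le_div_iff₀ hε]
    calc h ^ j * ε ≤ h ^ j * |(taylor y Q).coeff j| := by gcongr
      _ ≤ _ := by linarith
  by_contra! hlt
  have hL1 : 1 ≤ K / ε + 1 := by linarith [div_pos hK hε]
  have h2 : ((K / ε + 1) * σ) ^ j ≤ h ^ j := pow_le_pow_left₀ (by positivity) hlt.le j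
  have h3 : (K / ε + 1) * σ ^ m ≤ ((K / ε + 1) * σ) ^ j := by
    rw [mul_pow]
    exact mul_le_mul (le_self_pow₀ hL1 (by omega)) (pow_le_pow_of_le_one hσ.le hσ1 hjm)
      (by positivity) (by positivity)
  have h4 : 0 < σ ^ m := by positivity
  nlinarith

theorem SingleSignedOn.mul {g h : ℝ → ℝ} {s : Set ℝ} (hg : SingleSignedOn g s)
    (hh : SingleSignedOn h s) : SingleSignedOn (fun x => g x * h x) s := by
  rcases hg with hg | hg <;> rcases hh with hh | hh
  · exact Or.inl fun x hx => mul_nonneg (hg x hx) (hh x hx)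
  · exact Or.inr fun x hx => mul_nonpos_of_nonneg_of_nonpos (hg x hx) (hh x hx)
  · exact Or.inr fun x hx => mul_nonpos_of_nonpos_of_nonneg (hg x hx) (hh x hx)
  · exact Or.inl fun x hx => mul_nonneg_of_nonpos_of_nonpos (hg x hx) (hh x hx)

theorem abs_le_or_le_abs_of_levels {g : ℝ → ℝ} {s : Set ℝ} {v : ℝ}
    (h : (∀ x ∈ s, g x ≤ v) ∨ ∀ x ∈ s, v ≤ g x)
    (h' : (∀ x ∈ s, g x ≤ -v) ∨ ∀ x ∈ s, -v ≤ g x) :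
    (∀ x ∈ s, |g x| ≤ v) ∨ ∀ x ∈ s, v ≤ |g x| := by
  rcases h with h | h
  · rcases h' with h' | h'
    · exact Or.inr fun x hx => le_abs.2 (Or.inr (by linarith [h' x hx]))
    · exact Or.inl fun x hx => abs_le.2 ⟨h' x hx, h x hx⟩
  · exact Or.inr fun x hx => le_abs.2 (Or.inl (h x hx))

theorem norm_integral_exp_le_length {F : ℝ → ℝ} {c d lam : ℝ} (hcd : c ≤ d) :
    ‖∫ x in c..d, Complex.exp (Complex.I * (lam : ℂ) * (F x : ℂ))‖ ≤ d - c := by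
  have := intervalIntegral.norm_integral_le_of_norm_le_const (a := c) (b := d) (C := 1)
    (f := fun x => Complex.exp (Complex.I * (lam : ℂ) * (F x : ℂ))) fun x _ => by
      rw [show Complex.I * (lam : ℂ) * (F x : ℂ) = ((lam * F x : ℝ) : ℂ) * Complex.I by
        push_cast; ring]
      exact (Complex.norm_exp_ofReal_mul_I _).le
  rwa [one_mul, abs_of_nonneg (sub_nonneg.2 hcd)] at this

theorem ContinuousOn.abs_sub_le_of_abs_eval_le {f : ℝ → ℝ} {c d τ w : ℝ} {Q : Polynomial ℝ}
    (hf : ContinuousOn f (Set.Icc c d))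
    (hQ : ∀ y h : ℝ, 0 ≤ h → (∀ z ∈ Set.Icc y (y + h), |Q.eval z| ≤ τ) → h ≤ w)
    (hsmall : ∀ x ∈ Set.Icc c d, |Q.eval (f x)| ≤ τ) :
    ∀ x ∈ Set.Icc c d, |f x - f c| ≤ w := by
  intro x hx
  have hsub : Set.uIcc (f c) (f x) ⊆ f '' Set.Icc c d := by
    refine (intermediate_value_uIcc (hf.mono ?_)).trans (Set.image_mono ?_) <;>
    · rw [Set.uIcc_of_le hx.1]
      exact Set.Icc_subset_Icc_right hx.2
  have := hQ (min (f c) (f x)) |f x - f c| (abs_nonneg _) (by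
    intro z hz
    have hz' : z ∈ Set.uIcc (f c) (f x) := by
      rw [Set.uIcc, Set.mem_Icc]
      refine ⟨hz.1, hz.2.trans (le_of_eq ?_)⟩
      have h1 := max_sub_min_eq_abs (f c) (f x)
      change max (f c) (f x) - min (f c) (f x) = _ at h1
      change _ = max (f c) (f x)
      linarith
    obtain ⟨t, ht, rfl⟩ := hsub hz'
    exact hsmall t ht)
  exact this

/-- If `f` has slope at most `σ ^ (1 - δ)` on an interval whose length is bounded in terms of
the oscillation of `f`, then the interval is short. -/
theorem length_le_of_small_deriv {f f' : ℝ → ℝ} {c d δ σ B : ℝ} (hcd : c < d) (hδ0 : 0 < δ)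
    (hδ1 : δ < 1) (hσ : 0 < σ) (hB : 0 ≤ B) (hf : ContinuousOn f (Set.Icc c d))
    (hd : ∀ x ∈ Set.Ioo c d, HasDerivAt f (f' x) x)
    (hL : ∀ y ε : ℝ, 0 < ε → (∀ x ∈ Set.Icc c d, |f x - y| ≤ ε) → d - c ≤ B * ε ^ δ)
    (hsmall : ∀ x ∈ Set.Ioo c d, |f' x| ≤ σ ^ (1 - δ)) :
    d - c ≤ B ^ (1 / (1 - δ)) * σ ^ δ := by
  have hl : 0 < d - c := sub_pos.2 hcd
  have hδ' : 0 < 1 - δ := by linarith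
  have hμ : 0 < σ ^ (1 - δ) := Real.rpow_pos_of_pos hσ _
  have h1 := hL (f c) (σ ^ (1 - δ) * (d - c)) (by positivity) (by
    intro x hx
    rcases hx.1.eq_or_lt with rfl | hcx
    · simp only [sub_self, abs_zero]
      positivity
    · obtain ⟨ξ, hξ, heq⟩ := exists_hasDerivAt_eq_slope f f' hcx
        (hf.mono (Set.Icc_subset_Icc_right hx.2))
        (fun z hz => hd z ⟨hz.1, hz.2.trans_le hx.2⟩)
      have hxc : 0 < x - c := sub_pos.2 hcx
      have h2 : f x - f c = f' ξ * (x - c) := by rw [heq]; field_simp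
      rw [h2, abs_mul, abs_of_pos hxc]
      have := hsmall ξ ⟨hξ.1, hξ.2.trans_le hx.2⟩
      gcongr
      exact hx.2)
  rw [Real.mul_rpow hμ.le hl.le, ← Real.rpow_mul hσ.le] at h1
  have h2 : (d - c) ^ (1 - δ) ≤ B * σ ^ ((1 - δ) * δ) := by
    rw [Real.rpow_sub hl, Real.rpow_one, div_le_iff₀ (by positivity)]
    linarith
  have h3 := Real.rpow_le_rpow (by positivity) h2 (by positivity : 0 ≤ 1 / (1 - δ))
  rw [← Real.rpow_mul hl.le, Real.mul_rpow hB (by positivity), ← Real.rpow_mul hσ.le,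
    mul_one_div_cancel hδ'.ne', Real.rpow_one] at h3
  rwa [show (1 - δ) * δ * (1 / (1 - δ)) = δ by field_simp] at h3

open Polynomial in
theorem norm_integral_exp_eval_le {f f' f'' : ℝ → ℝ} {c d τ μ lam : ℝ} {P : ℝ[X]} (hcd : c ≤ d)
    (hlam : lam ≠ 0) (hτ : 0 < τ) (hμ : 0 < μ)
    (hf : ContinuousOn f (Set.Icc c d)) (hf' : ContinuousOn f' (Set.Icc c d))
    (hf'' : ContinuousOn f'' (Set.Icc c d))
    (hd : ∀ x ∈ Set.Ioo c d, HasDerivAt f (f' x) x)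
    (hd' : ∀ x ∈ Set.Ioo c d, HasDerivAt f' (f'' x) x)
    (hs' : SingleSignedOn f' (Set.Ioo c d)) (hs'' : SingleSignedOn f'' (Set.Ioo c d))
    (hsP : SingleSignedOn (fun x => P.derivative.derivative.eval (f x)) (Set.Ioo c d))
    (hPτ : ∀ x ∈ Set.Icc c d, τ ≤ |P.derivative.eval (f x)|)
    (hfμ : ∀ x ∈ Set.Icc c d, μ ≤ |f' x|) :
    ‖∫ x in c..d, Complex.exp (Complex.I * (lam : ℂ) * ((P.eval (f x) : ℝ) : ℂ))‖ ≤
      6 * (τ⁻¹ * μ⁻¹) / |lam| := by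
  have hP0 : ∀ x ∈ Set.Icc c d, P.derivative.eval (f x) ≠ 0 := fun x hx =>
    abs_pos.1 (hτ.trans_le (hPτ x hx))
  have hf0 : ∀ x ∈ Set.Icc c d, f' x ≠ 0 := fun x hx => abs_pos.1 (hμ.trans_le (hfμ x hx))
  have hev (R : ℝ[X]) : ContinuousOn (fun x => R.eval (f x)) (Set.Icc c d) :=
    R.continuous.comp_continuousOn hf
  have hdev (R : ℝ[X]) : ∀ x ∈ Set.Ioo c d,
      HasDerivAt (fun x => R.eval (f x)) (R.derivative.eval (f x) * f' x) x := fun x hx =>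
    (R.hasDerivAt (f x)).comp x (hd x hx)
  refine norm_integral_exp_le_of_reciprocal_deriv
    (F' := fun x => P.derivative.eval (f x) * f' x)
    (u := fun x => (P.derivative.eval (f x))⁻¹)
    (u' := fun x => P.derivative.derivative.eval (f x) * f' x *
      (-((P.derivative.eval (f x)) ^ 2)⁻¹))
    (v := fun x => (f' x)⁻¹) (v' := fun x => f'' x * (-((f' x) ^ 2)⁻¹))
    hcd hlam (hev P) ((hev _).mul hf') (hdev P) ((hev _).inv₀ hP0)
    (((hev _).mul hf').mul (((hev _).pow 2).inv₀ fun x hx => pow_ne_zero 2 (hP0 x hx)).neg)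
    ?_ (hf'.inv₀ hf0) (hf''.mul ((hf'.pow 2).inv₀ fun x hx => pow_ne_zero 2 (hf0 x hx)).neg)
    ?_ ?_ ?_ ?_ ?_ ?_
  · intro x hx
    convert! (hdev P.derivative x hx).inv (hP0 x (Set.Ioo_subset_Icc_self hx)) using 1
    ring
  · intro x hx
    convert! (hd' x hx).inv (hf0 x (Set.Ioo_subset_Icc_self hx)) using 1
    ring
  · intro x hx
    have := hP0 x hx
    have := hf0 x hx
    field_simp
  · intro x hx
    rw [abs_inv]
    exact inv_anti₀ hτ (hPτ x hx)
  · intro x hx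
    rw [abs_inv]
    exact inv_anti₀ hμ (hfμ x hx)
  · exact (hsP.mul hs').mul (Or.inr fun x _ => neg_nonpos.2 (by positivity))
  · exact hs''.mul (Or.inr fun x _ => neg_nonpos.2 (by positivity))

open Polynomial in
/-- On an interval on which all the relevant quantities have constant sign, the oscillatory
integral is bounded by one of three estimates: `P'(f)` is small, `f'` is small, or both are
large. -/
theorem norm_integral_exp_eval_le_of_signs {f f' f'' : ℝ → ℝ} {c d δ σ B w lam : ℝ} {m : ℕ}
    {P : ℝ[X]} (hcd : c ≤ d) (hδ0 : 0 < δ) (hδ1 : δ < 1) (hσ : 0 < σ) (hB : 0 ≤ B) (hw : 0 < w)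
    (hlam : lam ≠ 0) (hσlam : |lam| * σ ^ m * σ = 1)
    (hf : ContinuousOn f (Set.Icc c d)) (hf' : ContinuousOn f' (Set.Icc c d))
    (hf'' : ContinuousOn f'' (Set.Icc c d))
    (hd : ∀ x ∈ Set.Ioo c d, HasDerivAt f (f' x) x)
    (hd' : ∀ x ∈ Set.Ioo c d, HasDerivAt f' (f'' x) x)
    (hL : ∀ y ε : ℝ, 0 < ε → (∀ x ∈ Set.Icc c d, |f x - y| ≤ ε) → d - c ≤ B * ε ^ δ)
    (hQ : ∀ y h : ℝ, 0 ≤ h → (∀ z ∈ Set.Icc y (y + h), |P.derivative.eval z| ≤ σ ^ m) → h ≤ w)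
    (hs' : SingleSignedOn f' (Set.Ioo c d)) (hs'' : SingleSignedOn f'' (Set.Ioo c d))
    (hsP : SingleSignedOn (fun x => P.derivative.derivative.eval (f x)) (Set.Ioo c d))
    (hP : (∀ x ∈ Set.Ioo c d, |P.derivative.eval (f x)| ≤ σ ^ m) ∨
      ∀ x ∈ Set.Ioo c d, σ ^ m ≤ |P.derivative.eval (f x)|)
    (hfμ : (∀ x ∈ Set.Ioo c d, |f' x| ≤ σ ^ (1 - δ)) ∨
      ∀ x ∈ Set.Ioo c d, σ ^ (1 - δ) ≤ |f' x|) :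
    ‖∫ x in c..d, Complex.exp (Complex.I * (lam : ℂ) * ((P.eval (f x) : ℝ) : ℂ))‖ ≤
      B * w ^ δ + B ^ (1 / (1 - δ)) * σ ^ δ + 6 * σ ^ δ := by
  have h1 : 0 ≤ B * w ^ δ := by positivity
  have h2 : 0 ≤ B ^ (1 / (1 - δ)) * σ ^ δ := by positivity
  have h3 : 0 ≤ 6 * σ ^ δ := by positivity
  rcases hcd.eq_or_lt with rfl | hlt
  · rw [intervalIntegral.integral_same, norm_zero]
    positivity
  have hcl : closure (Set.Ioo c d) = Set.Icc c d := closure_Ioo hlt.ne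
  have hPc : ContinuousOn (fun x => |P.derivative.eval (f x)|) (closure (Set.Ioo c d)) := by
    rw [hcl]
    exact (P.derivative.continuous.comp_continuousOn hf).abs
  have hlen := norm_integral_exp_le_length (F := fun x => P.eval (f x)) (lam := lam) hcd
  rcases hP with hP | hP
  · have hP' : ∀ x ∈ Set.Icc c d, |P.derivative.eval (f x)| ≤ σ ^ m := fun x hx =>
      le_on_closure hP hPc continuousOn_const (by rwa [hcl])
    have := hL (f c) w hw (hf.abs_sub_le_of_abs_eval_le hQ hP')
    linarith
  rcases hfμ with hfμ | hfμ
  · have := length_le_of_small_deriv hlt hδ0 hδ1 hσ hB hf hd hL hfμ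
    linarith
  have hP' : ∀ x ∈ Set.Icc c d, σ ^ m ≤ |P.derivative.eval (f x)| := fun x hx =>
    le_on_closure hP continuousOn_const hPc (by rwa [hcl])
  have hf'' : ∀ x ∈ Set.Icc c d, σ ^ (1 - δ) ≤ |f' x| := fun x hx =>
    le_on_closure hfμ continuousOn_const (by rw [hcl]; exact hf'.abs) (by rwa [hcl])
  have hmain := norm_integral_exp_eval_le hcd hlam (pow_pos hσ m)
    (Real.rpow_pos_of_pos hσ (1 - δ)) hf hf' ‹_› hd hd' hs' hs'' hsP hP' hf''
  have hval : 6 * ((σ ^ m)⁻¹ * (σ ^ (1 - δ))⁻¹) / |lam| = 6 * σ ^ δ := by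
    have hl : 0 < |lam| := abs_pos.2 hlam
    have hδp : 0 < σ ^ δ := Real.rpow_pos_of_pos hσ δ
    have hm : 0 < σ ^ m := pow_pos hσ m
    rw [Real.rpow_sub hσ, Real.rpow_one]
    field_simp
    linarith
  rw [hval] at hmain
  linarith

/-- Let `N ≥ 2`, `0 < δ < 1`, `A ≥ 1`. If `f` is smooth on `I = [a, b]`
with `f^{(N)}` single-signed on `I`, and `|∫_I e^{iλ f}| ≤ A |λ|^{-δ}` for all `λ ≠ 0`,
then there is a constant `C = C(d, N, δ)` such that for every polynomial `P` of degree
`d ≥ 2` whose derivative `P'` is an SND polynomial of degree `d - 1`, and all `|λ| ≥ 1`,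
`|∫_I e^{iλ P(f)}| ≤ C · A^{1/(1-δ)} · |λ|^{-δ/d}`. -/
theorem stmt_2 (N d : ℕ) (hN : 2 ≤ N) (hd : 2 ≤ d) (δ : ℝ) (hδ0 : 0 < δ) (hδ1 : δ < 1) :
    ∃ C : ℝ, 0 < C ∧
      ∀ (a b : ℝ), a ≤ b →
      ∀ f : ℝ → ℝ, ContDiffOn ℝ (⊤ : ℕ∞) f (Set.Icc a b) →
      ((∀ x ∈ Set.Icc a b, 0 ≤ iteratedDerivWithin N f (Set.Icc a b) x) ∨
        (∀ x ∈ Set.Icc a b, iteratedDerivWithin N f (Set.Icc a b) x ≤ 0)) →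
      ∀ A : ℝ, 1 ≤ A →
      (∀ lam : ℝ, lam ≠ 0 →
        ‖∫ x in Set.Icc a b, Complex.exp (Complex.I * (lam : ℂ) * (f x : ℂ))‖ ≤
          A * |lam| ^ (-δ)) →
      ∀ P : Polynomial ℝ, P.natDegree = d →
        P.derivative.natDegree = d - 1 → IsSND P.derivative →
      ∀ lam : ℝ, 1 ≤ |lam| →
        ‖∫ x in Set.Icc a b, Complex.exp (Complex.I * (lam : ℂ) * ((P.eval (f x) : ℝ) : ℂ))‖ ≤
          C * A ^ (1 / (1 - δ)) * |lam| ^ (-(δ / (d : ℝ))) := by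
  obtain ⟨L, hL0, hL⟩ := exists_length_le_of_decay hδ1
  obtain ⟨K, hK0, hK⟩ := IsSND.exists_length_le (d - 1) (by omega)
  set n : ℕ := (2 ^ (N - 1) - 1) + (2 ^ (N - 2) - 1) with hn
  set k : ℕ := n + (n + 1) * ((1 + 1) + (d + d) + d) with hk
  refine ⟨(k + 1) * (L * K ^ δ + L ^ (1 / (1 - δ)) + 6), by positivity, ?_⟩
  intro a b hab f hf hfN A hA hdec P hPd hP'd hSND lam hlam
  have hA0 : 0 < A := by linarith
  have hl0 : 0 < |lam| := by linarith
  have hlam0 : lam ≠ 0 := abs_pos.1 hl0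
  have hδ' : 0 < 1 - δ := by linarith
  have hd0 : (0 : ℝ) < d := by exact_mod_cast (by omega : 0 < d)
  rcases hab.eq_or_lt with rfl | hlt
  · simp only [Set.Icc_self, Measure.restrict_singleton, Real.volume_singleton, zero_smul,
      integral_zero_measure, norm_zero]
    positivity
  set σ : ℝ := |lam| ^ (-(1 / (d : ℝ))) with hσdef
  have hσ : 0 < σ := Real.rpow_pos_of_pos hl0 _
  have hσ1 : σ ≤ 1 := Real.rpow_le_one_of_one_le_of_nonpos hlam (by
    rw [neg_nonpos]; positivity)
  have hσδ : |lam| ^ (-(δ / (d : ℝ))) = σ ^ δ := by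
    rw [hσdef, ← Real.rpow_mul hl0.le]
    congr 1
    ring
  have hσlam : |lam| * σ ^ (d - 1) * σ = 1 := by
    rw [mul_assoc, ← pow_succ, Nat.sub_add_cancel (by omega), hσdef, ← Real.rpow_natCast,
      ← Real.rpow_mul hl0.le, neg_mul, one_div_mul_cancel hd0.ne', Real.rpow_neg_one]
    exact mul_inv_cancel₀ hl0.ne'
  have hAA : A ≤ A ^ (1 / (1 - δ)) := by
    conv_lhs => rw [← Real.rpow_one A]
    apply Real.rpow_le_rpow_of_exponent_le hA
    rw [le_div_iff₀ hδ']
    linarith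
  have hA1 : 1 ≤ A ^ (1 / (1 - δ)) := hA.trans hAA
  set F : ℕ → ℝ → ℝ := fun j => iteratedDerivWithin j f (Set.Icc a b) with hF
  have hF0 : F 0 = f := by rw [hF]; exact iteratedDerivWithin_zero
  have hFc (j : ℕ) : ContinuousOn (F j) (Set.Icc a b) :=
    hf.continuousOn_iteratedDerivWithin (by exact_mod_cast le_top) (uniqueDiffOn_Icc hlt)
  have hFd (j : ℕ) : ∀ x ∈ Set.Ioo a b, HasDerivAt (F j) (F (j + 1) x) x := by
    intro x hx
    have hdiff := hf.differentiableOn_iteratedDerivWithin (m := j)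
      (by exact_mod_cast ENat.natCast_lt_top j) (uniqueDiffOn_Icc hlt) x
      (Set.Ioo_subset_Icc_self hx)
    simp only [hF, iteratedDerivWithin_succ]
    exact hdiff.hasDerivWithinAt.hasDerivAt (Icc_mem_nhds hx.1 hx.2)
  have hfc : ContinuousOn f (Set.Icc a b) := hf.continuousOn
  have hsN : SingleSignedOn (F N) (Set.Ioo a b) :=
    hfN.imp (fun h x hx => h x (Set.Ioo_subset_Icc_self hx))
      (fun h x hx => h x (Set.Ioo_subset_Icc_self hx))
  have hsplit1 := splitsInto_singleSigned hab (N - 1) F hFd 1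
    (by rwa [Nat.add_sub_cancel' (by omega)])
  have hsplit2 := splitsInto_singleSigned hab (N - 2) F hFd 2
    (by rwa [Nat.add_sub_cancel' hN])
  set M : ℝ := (L * K ^ δ + L ^ (1 / (1 - δ)) + 6) * A ^ (1 / (1 - δ)) * σ ^ δ with hM
  have hsplit : SplitsInto k (fun c e => ‖∫ x in c..e, Complex.exp
      (Complex.I * (lam : ℂ) * ((P.eval (f x) : ℝ) : ℂ))‖ ≤ M) a b := by
    refine SplitsInto.bind hab ((hsplit1.and hsplit2).mono le_rfl fun c e hac hce heb hs => ?_)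
    obtain ⟨hs1, hs2⟩ := hs
    have hsub : Set.Ioo c e ⊆ Set.Ioo a b := Set.Ioo_subset_Ioo hac heb
    have hmono1 := hs2.monotoneOn_or_antitoneOn fun x hx => hFd 1 x (hsub hx)
    have hmono0 := hs1.monotoneOn_or_antitoneOn fun x hx => hFd 0 x (hsub hx)
    rw [hF0] at hmono0
    have hlev := (splitsInto_level hmono1 (σ ^ (1 - δ))).and
      (splitsInto_level hmono1 (-σ ^ (1 - δ)))
    have hpol := (splitsInto_eval hmono0 (P.derivative - Polynomial.C (σ ^ (d - 1))) (n := d)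
      (by rw [Polynomial.natDegree_sub_C]; omega)).and
      (splitsInto_eval hmono0 (P.derivative + Polynomial.C (σ ^ (d - 1))) (n := d)
      (by rw [Polynomial.natDegree_add_C]; omega))
    have hder := splitsInto_eval hmono0 P.derivative.derivative (n := d)
      ((Polynomial.natDegree_derivative_le _).trans (by omega))
    refine ((hlev.and hpol).and hder).mono le_rfl fun c' e' hc' hce' he' hall => ?_
    obtain ⟨⟨⟨hl1, hl2⟩, hp1, hp2⟩, hsP⟩ := hall
    have hsub1 : Set.Ioo c' e' ⊆ Set.Ioo c e := Set.Ioo_subset_Ioo hc' he'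
    have hsub2 : Set.Icc c' e' ⊆ Set.Icc a b :=
      Set.Icc_subset_Icc (hac.trans hc') (he'.trans heb)
    have hrestr {g : ℝ → ℝ} (hg : SingleSignedOn g (Set.Ioo c e)) :
        SingleSignedOn g (Set.Ioo c' e') :=
      hg.imp (fun h x hx => h x (hsub1 hx)) (fun h x hx => h x (hsub1 hx))
    have hPdich := abs_le_or_le_abs_of_levels (g := fun x => P.derivative.eval (f x))
      (s := Set.Ioo c' e') (v := σ ^ (d - 1))
      (hp1.symm.imp (fun h x hx => by simpa using h x hx) (fun h x hx => by simpa using h x hx))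
      (hp2.symm.imp
        (fun h x hx => by
          have := h x hx
          simp only [Polynomial.eval_add, Polynomial.eval_C] at this
          linarith)
        (fun h x hx => by
          have := h x hx
          simp only [Polynomial.eval_add, Polynomial.eval_C] at this
          linarith))
    have hbound := norm_integral_exp_eval_le_of_signs (f := f) (f' := F 1) (f'' := F 2)
      (B := L * A) (w := K * σ) (m := d - 1) hce' hδ0 hδ1 hσ (by positivity) (by positivity)
      hlam0 hσlam
      (hfc.mono hsub2) ((hFc 1).mono hsub2) ((hFc 2).mono hsub2)
      (fun x hx => by simpa only [hF0] using hFd 0 x (hsub (hsub1 hx)))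
      (fun x hx => hFd 1 x (hsub (hsub1 hx)))
      (fun y ε hε hy => hL a b f A hA0.le hfc hdec c' e' y ε (hac.trans hc') hce'
        (he'.trans heb) hε hy)
      (fun y h hh hz => hK P.derivative hP'd hSND σ y h hσ hσ1 hh hz)
      (hrestr hs1) (hrestr hs2) hsP hPdich (abs_le_or_le_abs_of_levels hl1 hl2)
    refine hbound.trans ?_
    rw [Real.mul_rpow hK0.le hσ.le, Real.mul_rpow hL0.le hA0.le]
    have hσp : 0 < σ ^ δ := Real.rpow_pos_of_pos hσ δ
    calc L * A * (K ^ δ * σ ^ δ) + L ^ (1 / (1 - δ)) * A ^ (1 / (1 - δ)) * σ ^ δ + 6 * σ ^ δ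
        ≤ L * A ^ (1 / (1 - δ)) * (K ^ δ * σ ^ δ) +
          L ^ (1 / (1 - δ)) * A ^ (1 / (1 - δ)) * σ ^ δ + 6 * A ^ (1 / (1 - δ)) * σ ^ δ := by
          gcongr
          linarith
      _ = M := by rw [hM]; ring
  have hcont : ContinuousOn (fun x => Complex.exp
      (Complex.I * (lam : ℂ) * ((P.eval (f x) : ℝ) : ℂ))) (Set.Icc a b) := by
    have := P.continuous.comp_continuousOn hfc
    simp only [Function.comp_def] at this
    fun_prop
  have hfinal := hsplit.norm_integral_le hab (by positivity) hcont
  rw [integral_Icc_eq_integral_Ioc, ← intervalIntegral.integral_of_le hab, hσδ]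
  refine hfinal.trans (le_of_eq ?_)
  rw [hM]
  ring
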